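/- Let T be a finite automorphism-free tree that is minimal, i.e., there is no leaf l of T such that T \ l is automorphism-free. Then T has exactly one vertex of degree three, all other vertices of T have degree at most two, and the three components of T minus its degree-three vertex are paths on 1, 2, and 3 vertices respectively. -/

import Mathlib

open SimpleGraph

/-- A graph is automorphism-free if its only automorphism is the trivial (identity) one. -/
def AutFree {V : Type*} (G : SimpleGraph V) : Prop :=
  ∀ φ : G ≃g G, ∀ v : V, φ v = v

/-- A leaf of a graph is a vertex of degree one. -/
def IsLeaf {V : Type*} (G : SimpleGraph V) (l : V) : Prop :=
  (G.neighborSet l).ncard = 1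

/-- `compOf G v x` is the vertex set of the component of `G \ v` (the graph obtained by
deleting the vertex `v`) containing `x` (for `x ≠ v`): the vertices reachable from `x`
by a walk avoiding `v`. -/
def compOf {V : Type*} (G : SimpleGraph V) (v x : V) : Set V :=
  {y : V | ∃ p : G.Walk x y, v ∉ p.support}

/-!
Let `c` be a centroid and `l` a leaf whose deletion creates no symmetry fixing `c`; such a leaf is
found by descending into the smallest branch at each step. By minimality `T \ l` still has a
nontrivial automorphism. It preserves the centroids of `T \ l`; if `c` is one of them, then it must
move `c` to a second one, so it exchanges two isomorphic halves of `T \ l`. Hence in every case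
some branch at `c` has about half of the vertices.

The extremal cases, in which `T` is cut into two equal halves or `c` has two branches of size `m`
with `|T| = 2m + 1`, are excluded as follows: each of the two rooted trees arises from the other by
deleting a leaf and attaching a new root on top, which forces them to be isomorphic. So
`|T| = 2m + 1` and a unique branch at `c` has size `m`. Deleting a leaf of this branch must make it
isomorphic to another one, so the remaining branches have sizes `m - 1` and `1`. If `m ≥ 4`, then a
leaf of the branch of size `m - 1` or the single vertex can be deleted instead, and the rest outside
the big branch is isomorphic to that branch in both cases, although the degrees of `c` in the two
remainders differ. Therefore `m ≤ 3`, and `m = 3` since the branches of sizes `m - 1` and `1` are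
not isomorphic.
-/

namespace AsymmetricTree

variable {V : Type*} {G : SimpleGraph V} {X Y Z : Set V} {a b c d e x y z : V}

/-! ### Branches of a tree -/

lemma mem_compOf_self (h : a ≠ b) : b ∈ compOf G a b :=
  ⟨.nil, by simpa using h⟩

lemma notMem_compOf : a ∉ compOf G a b :=
  fun ⟨p, hp⟩ ↦ hp p.end_mem_support

lemma mem_compOf_of_adj (hy : y ∈ compOf G a b) (hyz : G.Adj y z) (hz : z ≠ a) :
    z ∈ compOf G a b := by
  obtain ⟨p, hp⟩ := hy
  exact ⟨p.concat hyz, by simp [Walk.support_concat, hp, hz.symm]⟩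

lemma eq_of_adj_of_mem_compOf (hG : G.IsAcyclic) (hab : G.Adj a b) (hay : G.Adj a y)
    (hy : y ∈ compOf G a b) : y = b := by
  obtain ⟨p, hp⟩ := hy
  have hbridge := isBridge_iff_forall_walk_mem_edges.1
    (isAcyclic_iff_forall_adj_isBridge.1 hG hay) (.cons hab p)
  rw [Walk.edges_cons, List.mem_cons, Sym2.congr_right] at hbridge
  exact hbridge.resolve_right fun h ↦ hp (p.fst_mem_support_of_mem_edges h)

lemma compOf_injective_of_adj (hG : G.IsAcyclic) (hab : G.Adj a b) (hac : G.Adj a c)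
    (hb : y ∈ compOf G a b) (hc : y ∈ compOf G a c) : b = c := by
  obtain ⟨p, hp⟩ := hb
  obtain ⟨q, hq⟩ := hc
  exact eq_of_adj_of_mem_compOf hG hac hab ⟨q.append p.reverse, by simp [hp, hq]⟩

lemma adj_iff_of_mem_compOf (hG : G.IsAcyclic) (hbe : G.Adj b e) (hx : x ∈ compOf G b e)
    (hy : y ∉ compOf G b e) : G.Adj x y ↔ x = e ∧ y = b := by
  refine ⟨fun h ↦ ?_, fun ⟨hx, hy⟩ ↦ hx ▸ hy ▸ hbe.symm⟩
  obtain rfl : y = b := by_contra fun hyb ↦ hy (mem_compOf_of_adj hx h hyb)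
  exact ⟨eq_of_adj_of_mem_compOf hG hbe h.symm hx, rfl⟩

lemma mem_compOf_or_mem_compOf (hab : G.Adj a b) (hy : G.Reachable a y) :
    y ∈ compOf G a b ∨ y ∈ compOf G b a := by
  induction (reachable_iff_reflTransGen a y).1 hy with
  | refl => exact .inr (mem_compOf_self hab.ne')
  | @tail y z hay hyz ih =>
    by_cases hza : z = a
    · exact .inr (hza.symm ▸ mem_compOf_self hab.ne')
    by_cases hzb : z = b
    · exact .inl (hzb.symm ▸ mem_compOf_self hab.ne)
    exact (ih ((reachable_iff_reflTransGen a y).2 hay)).imp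
      (mem_compOf_of_adj · hyz hza) (mem_compOf_of_adj · hyz hzb)

lemma disjoint_compOf (hG : G.IsAcyclic) (hab : G.Adj a b) :
    Disjoint (compOf G a b) (compOf G b a) := by
  refine Set.disjoint_left.2 fun y ⟨p, hp⟩ ⟨q, hq⟩ ↦ ?_
  have hbridge := isBridge_iff_forall_walk_mem_edges.1
    (isAcyclic_iff_forall_adj_isBridge.1 hG hab) (q.append p.reverse)
  rw [Walk.edges_append, Walk.edges_reverse, List.mem_append, List.mem_reverse] at hbridge
  exact hbridge.elim (fun h ↦ hq (q.snd_mem_support_of_mem_edges h))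
    fun h ↦ hp (p.fst_mem_support_of_mem_edges h)

lemma connected_induce_iff_forall (hb : b ∈ X) :
    (G.induce X).Connected ↔
      ∀ P : V → Prop, P b → (∀ y ∈ X, ∀ z ∈ X, P y → G.Adj y z → P z) → ∀ y ∈ X, P y := by
  refine ⟨fun hX P hPb hP y hy ↦ ?_, fun h ↦ ?_⟩
  · suffices ∀ y : X, P y from this ⟨y, hy⟩
    intro y
    induction (reachable_iff_reflTransGen _ _).1 (hX.preconnected ⟨b, hb⟩ y) with
    | refl => exact hPb
    | @tail y z _ hyz ih => exact hP y y.2 z z.2 ih hyz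
  · refine (connected_iff_exists_forall_reachable _).2 ⟨⟨b, hb⟩, fun ⟨y, hy⟩ ↦ ?_⟩
    exact h (fun y ↦ ∃ hy : y ∈ X, (G.induce X).Reachable ⟨b, hb⟩ ⟨y, hy⟩) ⟨hb, .rfl⟩
      (fun y _ z hz ⟨_, hby⟩ hyz ↦ ⟨hz, hby.trans (Adj.reachable (G := G.induce X) hyz)⟩) y hy |>.2

/-- The part in `X` of the component of `G \ b` containing `e`. For `X` inducing a subtree that
contains the edge `be`, this is the branch at `b` through `e` of that subtree. -/
def branch (G : SimpleGraph V) (X : Set V) (b e : V) : Set V :=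
  X ∩ compOf G b e

lemma branch_subset : branch G X b e ⊆ X :=
  Set.inter_subset_left

lemma notMem_branch : b ∉ branch G X b e :=
  fun h ↦ notMem_compOf h.2

lemma mem_branch_self (he : e ∈ X) (hbe : G.Adj b e) : e ∈ branch G X b e :=
  ⟨he, mem_compOf_self hbe.ne⟩

lemma branch_sdiff_singleton (l : V) : branch G (X \ {l}) b e = branch G X b e \ {l} :=
  Set.sdiff_inter_right_comm ..

lemma branch_univ : branch G .univ b e = compOf G b e :=
  Set.univ_inter _

lemma exists_mem_branch (hX : (G.induce X).Connected) (hb : b ∈ X) (hy : y ∈ X) (hyb : y ≠ b) :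
    ∃ e ∈ X, G.Adj b e ∧ y ∈ branch G X b e := by
  refine (connected_induce_iff_forall hb).1 hX
    (fun y ↦ y ≠ b → ∃ e ∈ X, G.Adj b e ∧ y ∈ branch G X b e) (fun h ↦ (h rfl).elim)
    (fun y _ z hz ih hyz hzb ↦ ?_) y hy hyb
  by_cases hyb : y = b
  · subst hyb
    exact ⟨z, hz, hyz, mem_branch_self hz hyz⟩
  · obtain ⟨e, he, hbe, hye⟩ := ih hyb
    exact ⟨e, he, hbe, hz, mem_compOf_of_adj hye.2 hyz hzb⟩

lemma connected_branch (hG : G.IsAcyclic) (hX : (G.induce X).Connected) (he : e ∈ X)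
    (hbe : G.Adj b e) : (G.induce (branch G X b e)).Connected := by
  refine (connected_induce_iff_forall (mem_branch_self he hbe)).2 fun P hPe hP y hy ↦ ?_
  refine (connected_induce_iff_forall he).1 hX (fun y ↦ y ∈ compOf G b e → P y) (fun _ ↦ hPe)
    (fun y hy z hz ih hyz hze ↦ ?_) y hy.1 hy.2
  by_cases hye : y ∈ compOf G b e
  · exact hP y ⟨hy, hye⟩ z ⟨hz, hze⟩ (ih hye) hyz
  · exact ((adj_iff_of_mem_compOf hG hbe hze hye).1 hyz.symm).1 ▸ hPe

lemma subset_compOf (hX : (G.induce X).Connected) (hd : d ∉ X) (he : e ∈ X)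
    (hde : e ∈ compOf G d c) : X ⊆ compOf G d c :=
  (connected_induce_iff_forall he).1 hX (· ∈ compOf G d c) hde
    fun _ _ _ hz hy hyz ↦ mem_compOf_of_adj hy hyz (ne_of_mem_of_not_mem hz hd)

lemma sdiff_branch (hG : G.IsAcyclic) (hX : (G.induce X).Connected) (hc : c ∈ X)
    (hcd : G.Adj c d) : X \ branch G X c d = branch G X d c := by
  have hreach : ∀ y ∈ X, G.Reachable c y :=
    (connected_induce_iff_forall hc).1 hX _ .rfl fun _ _ _ _ hy hyz ↦ hy.trans hyz.reachable
  ext y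
  refine ⟨fun ⟨hy, hyd⟩ ↦ ⟨hy, ?_⟩, fun ⟨hy, hyc⟩ ↦ ⟨hy, fun hyd ↦ ?_⟩⟩
  · exact (mem_compOf_or_mem_compOf hcd (hreach y hy)).resolve_left fun h ↦ hyd ⟨hy, h⟩
  · exact Set.disjoint_left.1 (disjoint_compOf hG hcd) hyd.2 hyc

lemma ncard_branch_add [Finite V] (hG : G.IsAcyclic) (hX : (G.induce X).Connected) (hc : c ∈ X)
    (hcd : G.Adj c d) : (branch G X c d).ncard + (branch G X d c).ncard = X.ncard := by
  rw [← sdiff_branch hG hX hc hcd, add_comm, Set.ncard_sdiff_add_ncard_of_subset branch_subset]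

/-! ### Isomorphisms of induced subgraphs -/

/-- `f` restricts to an isomorphism from the subgraph of `G` induced by `X` to the one induced
by `Y`. The isomorphism is encoded by a map on all vertices, whose values outside `X` are
irrelevant, so that isomorphisms can be restricted and glued without passing through subtypes. -/
structure IsoOn (G : SimpleGraph V) (f : V → V) (X Y : Set V) : Prop where
  bijOn : Set.BijOn f X Y
  adj_iff : ∀ x ∈ X, ∀ y ∈ X, (G.Adj (f x) (f y) ↔ G.Adj x y)

namespace IsoOn

variable {f g : V → V}

lemma id : IsoOn G id X X :=
  ⟨Set.bijOn_id X, fun _ _ _ _ ↦ .rfl⟩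

lemma comp (hg : IsoOn G g Y Z) (hf : IsoOn G f X Y) : IsoOn G (g ∘ f) X Z :=
  ⟨hg.bijOn.comp hf.bijOn, fun x hx y hy ↦
    (hg.adj_iff _ (hf.bijOn.mapsTo hx) _ (hf.bijOn.mapsTo hy)).trans (hf.adj_iff x hx y hy)⟩

lemma invFunOn [Nonempty V] (hf : IsoOn G f X Y) : IsoOn G (f.invFunOn X) Y X := by
  have hinv := hf.bijOn.invOn_invFunOn
  have hbij := hf.bijOn.symm hinv.symm
  refine ⟨hbij, fun x hx y hy ↦ ?_⟩
  rw [← hf.adj_iff _ (hbij.mapsTo hx) _ (hbij.mapsTo hy), hinv.2 hx, hinv.2 hy]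

/-- The isomorphism of induced subgraphs encoded by `f`. -/
noncomputable def iso (hf : IsoOn G f X Y) : G.induce X ≃g G.induce Y where
  toEquiv := hf.bijOn.equiv f
  map_rel_iff' {x y} := hf.adj_iff x x.2 y y.2

lemma connected (hf : IsoOn G f X Y) (hX : (G.induce X).Connected) : (G.induce Y).Connected :=
  hf.iso.connected_iff.1 hX

lemma sdiff_singleton (hf : IsoOn G f X Y) (hx : x ∈ X) : IsoOn G f (X \ {x}) (Y \ {f x}) :=
  ⟨hf.bijOn.sdiff_singleton hx, fun y hy z hz ↦ hf.adj_iff y hy.1 z hz.1⟩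

lemma mapsTo_branch (hG : G.IsAcyclic) (hf : IsoOn G f X Y) (hX : (G.induce X).Connected)
    (hb : b ∈ X) (he : e ∈ X) (hbe : G.Adj b e) :
    Set.MapsTo f (branch G X b e) (branch G Y (f b) (f e)) := by
  have hfbe : G.Adj (f b) (f e) := (hf.adj_iff b hb e he).2 hbe
  refine (connected_induce_iff_forall (mem_branch_self he hbe)).1 (connected_branch hG hX he hbe)
    (f · ∈ branch G Y (f b) (f e)) (mem_branch_self (hf.bijOn.mapsTo he) hfbe)
    fun y hy z hz hfy hyz ↦ ⟨hf.bijOn.mapsTo hz.1,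
      mem_compOf_of_adj hfy.2 ((hf.adj_iff y hy.1 z hz.1).2 hyz) fun hfz ↦ ?_⟩
  exact notMem_branch (hf.bijOn.injOn hz.1 hb hfz ▸ hz)

protected lemma branch (hG : G.IsAcyclic) (hf : IsoOn G f X Y) (hX : (G.induce X).Connected)
    (hb : b ∈ X) (he : e ∈ X) (hbe : G.Adj b e) :
    IsoOn G f (branch G X b e) (branch G Y (f b) (f e)) := by
  refine ⟨⟨hf.mapsTo_branch hG hX hb he hbe, hf.bijOn.injOn.mono branch_subset, fun y hy ↦ ?_⟩,
    fun x hx y hy ↦ hf.adj_iff x hx.1 y hy.1⟩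
  obtain ⟨x, hx, rfl⟩ := hf.bijOn.surjOn hy.1
  have hxb : x ≠ b := by
    rintro rfl
    exact notMem_branch hy
  obtain ⟨a, ha, hba, hxa⟩ := exists_mem_branch hX hb hx hxb
  have hfae : f a = f e := compOf_injective_of_adj hG ((hf.adj_iff b hb a ha).2 hba)
    ((hf.adj_iff b hb e he).2 hbe) (hf.mapsTo_branch hG hX hb ha hba hxa).2 hy.2
  exact ⟨x, hf.bijOn.injOn ha he hfae ▸ hxa, rfl⟩

lemma exists_glue (hG : G.IsAcyclic) {X₁ X₂ Y₁ Y₂ : Set V} (hf : IsoOn G f X₁ Y₁)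
    (hg : IsoOn G g X₂ Y₂) (he : e ∈ X₁) (hb : b ∈ X₂) (hbe : G.Adj b e)
    (hgf : G.Adj (g b) (f e)) (hX₁ : X₁ ⊆ compOf G b e) (hX₂ : Disjoint (compOf G b e) X₂)
    (hY₁ : Y₁ ⊆ compOf G (g b) (f e)) (hY₂ : Disjoint (compOf G (g b) (f e)) Y₂) :
    ∃ F : V → V, IsoOn G F (X₁ ∪ X₂) (Y₁ ∪ Y₂) ∧ Set.EqOn F f X₁ ∧ Set.EqOn F g X₂ := by
  classical
  have hX : Disjoint X₁ X₂ := hX₂.mono_left hX₁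
  have hFf : Set.EqOn (X₁.piecewise f g) f X₁ := X₁.piecewise_eqOn f g
  have hFg : Set.EqOn (X₁.piecewise f g) g X₂ :=
    (X₁.piecewise_eqOn_compl f g).mono hX.subset_compl_left
  have hcross : ∀ x ∈ X₁, ∀ y ∈ X₂, (G.Adj (f x) (g y) ↔ G.Adj x y) := fun x hx y hy ↦ by
    rw [adj_iff_of_mem_compOf hG hbe (hX₁ hx) (hX₂.notMem_of_mem_right hy),
      adj_iff_of_mem_compOf hG hgf (hY₁ (hf.bijOn.mapsTo hx))
        (hY₂.notMem_of_mem_right (hg.bijOn.mapsTo hy)),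
      hf.bijOn.injOn.eq_iff hx he, hg.bijOn.injOn.eq_iff hy hb]
  have hbij₁ := hf.bijOn.congr hFf.symm
  have hbij₂ := hg.bijOn.congr hFg.symm
  refine ⟨X₁.piecewise f g, ⟨hbij₁.union hbij₂ ((Set.injOn_union hX).2
    ⟨hbij₁.injOn, hbij₂.injOn, fun x hx y hy ↦ ?_⟩), ?_⟩, hFf, hFg⟩
  · exact (hY₂.mono_left hY₁).ne_of_mem (hbij₁.mapsTo hx) (hbij₂.mapsTo hy)
  · rintro x (hx | hx) y (hy | hy)
    · rw [hFf hx, hFf hy, hf.adj_iff x hx y hy]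
    · rw [hFf hx, hFg hy, hcross x hx y hy]
    · rw [hFg hx, hFf hy, G.adj_comm, hcross y hy x hx, G.adj_comm]
    · rw [hFg hx, hFg hy, hg.adj_iff x hx y hy]

end IsoOn

/-- The subgraphs of `G` induced by `X` and `Y`, rooted at `b` and `d`, are isomorphic as rooted
graphs. -/
def RootedIso (G : SimpleGraph V) (X : Set V) (b : V) (Y : Set V) (d : V) : Prop :=
  ∃ f, IsoOn G f X Y ∧ b ∈ X ∧ f b = d

namespace RootedIso

lemma mem_left (h : RootedIso G X b Y d) : b ∈ X :=
  let ⟨_, _, hb, _⟩ := h; hb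

lemma mem_right (h : RootedIso G X b Y d) : d ∈ Y :=
  let ⟨_, hf, hb, hfb⟩ := h; hfb ▸ hf.bijOn.mapsTo hb

lemma symm (h : RootedIso G X b Y d) : RootedIso G Y d X b := by
  have := Nonempty.intro b
  obtain ⟨f, hf, hb, rfl⟩ := h
  exact ⟨f.invFunOn X, hf.invFunOn, hf.bijOn.mapsTo hb, hf.bijOn.invOn_invFunOn.1 hb⟩

lemma trans (h : RootedIso G X b Y d) (h' : RootedIso G Y d Z e) : RootedIso G X b Z e := by
  obtain ⟨f, hf, hb, rfl⟩ := h
  obtain ⟨g, hg, -, rfl⟩ := h'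
  exact ⟨g ∘ f, hg.comp hf, hb, rfl⟩

lemma ncard_eq (h : RootedIso G X b Y d) : X.ncard = Y.ncard := by
  obtain ⟨f, hf, -⟩ := h
  rw [← hf.bijOn.image_eq, hf.bijOn.injOn.ncard_image]

lemma connected (h : RootedIso G X b Y d) (hX : (G.induce X).Connected) :
    (G.induce Y).Connected :=
  let ⟨_, hf, _⟩ := h; hf.connected hX

lemma of_ncard_eq_one (hb : b ∈ X) (hd : d ∈ Y) (hX : X.ncard = 1) (hY : Y.ncard = 1) :
    RootedIso G X b Y d := by
  obtain ⟨_, rfl⟩ := Set.ncard_eq_one.1 hX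
  obtain ⟨_, rfl⟩ := Set.ncard_eq_one.1 hY
  obtain rfl := hb
  obtain rfl := hd
  refine ⟨fun _ ↦ d, ⟨by simp [Set.bijOn_singleton], ?_⟩, rfl, rfl⟩
  rintro _ rfl _ rfl
  simp

lemma sdiff_root (h : RootedIso G X b Y d) (he : e ∈ X) (hbe : G.Adj b e) :
    ∃ f, G.Adj d f ∧ RootedIso G (X \ {b}) e (Y \ {d}) f := by
  obtain ⟨f, hf, hb, rfl⟩ := h
  exact ⟨f e, (hf.adj_iff b hb e he).2 hbe, f, hf.sdiff_singleton hb, ⟨he, hbe.ne'⟩, rfl⟩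

lemma of_sdiff_root (hG : G.IsAcyclic) (h : RootedIso G (X \ {b}) e (Y \ {d}) x)
    (hX : (G.induce (X \ {b})).Connected) (hb : b ∈ X) (hd : d ∈ Y) (hbe : G.Adj b e)
    (hdx : G.Adj d x) : RootedIso G X b Y d := by
  have hY := h.connected hX
  obtain ⟨f, hf, he, rfl⟩ := h
  have hconst : IsoOn G (fun _ ↦ d) {b} {d} :=
    ⟨by simp [Set.bijOn_singleton], by rintro _ rfl _ rfl; simp⟩
  obtain ⟨F, hF, -, hFb⟩ := hf.exists_glue hG hconst he rfl hbe hdx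
    (subset_compOf hX (fun h ↦ h.2 rfl) he (mem_compOf_self hbe.ne))
    (Set.disjoint_singleton_right.2 notMem_compOf)
    (subset_compOf hY (fun h ↦ h.2 rfl) (hf.bijOn.mapsTo he) (mem_compOf_self hdx.ne))
    (Set.disjoint_singleton_right.2 notMem_compOf)
  rw [Set.sdiff_union_of_subset (Set.singleton_subset_iff.2 hb),
    Set.sdiff_union_of_subset (Set.singleton_subset_iff.2 hd)] at hF
  exact ⟨F, hF, hb, hFb rfl⟩

end RootedIso

/-! ### Asymmetric rooted trees -/

lemma autFree_induce_iff :
    AutFree (G.induce X) ↔ ∀ f, IsoOn G f X X → Set.EqOn f id X := by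
  refine ⟨fun h f hf x hx ↦ congrArg Subtype.val (h hf.iso ⟨x, hx⟩), fun h φ v ↦ ?_⟩
  let f : V → V := Function.extend Subtype.val (fun x : X ↦ (φ x : V)) id
  have hfφ (x : X) : f x = φ x := Subtype.val_injective.extend_apply _ _ x
  have hf : IsoOn G f X X := by
    refine ⟨⟨fun x hx ↦ ?_, fun x hx y hy hxy ↦ ?_, fun y hy ↦ ?_⟩, fun x hx y hy ↦ ?_⟩
    · exact hfφ ⟨x, hx⟩ ▸ (φ ⟨x, hx⟩).2
    · rw [hfφ ⟨x, hx⟩, hfφ ⟨y, hy⟩] at hxy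
      exact congrArg Subtype.val (φ.injective (Subtype.ext hxy))
    · exact ⟨φ.symm ⟨y, hy⟩, (φ.symm ⟨y, hy⟩).2, by rw [hfφ, φ.apply_symm_apply]⟩
    · rw [hfφ ⟨x, hx⟩, hfφ ⟨y, hy⟩]
      exact φ.map_adj_iff (v := ⟨x, hx⟩) (w := ⟨y, hy⟩)
  exact Subtype.ext ((hfφ v).symm.trans (h f hf v.2))

/-- The subgraph of `G` induced by `X` has no nontrivial automorphism fixing the root `b`. -/
def RootedAsymm (G : SimpleGraph V) (X : Set V) (b : V) : Prop :=
  ∀ f, IsoOn G f X X → f b = b → Set.EqOn f id X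

lemma rootedAsymm_of_autFree (h : AutFree (G.induce X)) : RootedAsymm G X b :=
  fun f hf _ ↦ autFree_induce_iff.1 h f hf

lemma not_rootedIso_of_adj (hG : G.IsAcyclic) (hX : (G.induce X).Connected)
    (hA : AutFree (G.induce X)) (hc : c ∈ X) (hcd : G.Adj c d) :
    ¬ RootedIso G (branch G X c d) d (branch G X d c) c := by
  intro h
  obtain ⟨g, hg, -, hgc⟩ := h.symm
  obtain ⟨f, hf, hd, hfd⟩ := h
  obtain ⟨F, hF, hFf, -⟩ := hf.exists_glue hG hg hd (mem_branch_self hc hcd.symm) hcd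
    (hfd.symm ▸ hgc.symm ▸ hcd.symm) Set.inter_subset_right
    ((disjoint_compOf hG hcd).mono_right Set.inter_subset_right)
    (hfd.symm ▸ hgc.symm ▸ Set.inter_subset_right)
    (hfd.symm ▸ hgc.symm ▸ (disjoint_compOf hG hcd.symm).mono_right Set.inter_subset_right)
  rw [Set.union_comm (branch G X d c), ← sdiff_branch hG hX hc hcd,
    Set.union_sdiff_cancel branch_subset] at hF
  exact hcd.ne (((hFf hd).trans hfd).symm.trans (autFree_induce_iff.1 hA F hF hd.1))

lemma disjoint_compOf_sdiff_branch : Disjoint (compOf G b e) (X \ branch G X b e) :=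
  Set.disjoint_left.2 fun _ hx hx' ↦ hx'.2 ⟨hx'.1, hx⟩

lemma disjoint_compOf_of_ne (hG : G.IsAcyclic) (hbd : G.Adj b d) (hbe : G.Adj b e) (hde : d ≠ e) :
    Disjoint (compOf G b d) (compOf G b e) :=
  Set.disjoint_left.2 fun _ hxd hxe ↦ hde (compOf_injective_of_adj hG hbd hbe hxd hxe)

namespace RootedAsymm

protected lemma branch (hG : G.IsAcyclic) (hA : RootedAsymm G X b) (hb : b ∈ X) (he : e ∈ X)
    (hbe : G.Adj b e) : RootedAsymm G (branch G X b e) e := by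
  intro f hf hfe
  obtain ⟨F, hF, hFf, hFid⟩ := hf.exists_glue hG (.id (X := X \ branch G X b e))
    (mem_branch_self he hbe) ⟨hb, notMem_branch⟩ hbe (hfe.symm ▸ hbe) Set.inter_subset_right
    disjoint_compOf_sdiff_branch (hfe.symm ▸ Set.inter_subset_right)
    (hfe.symm ▸ disjoint_compOf_sdiff_branch)
  rw [Set.union_sdiff_cancel branch_subset] at hF
  exact fun x hx ↦ (hFf hx).symm.trans (hA F hF (hFid ⟨hb, notMem_branch⟩) hx.1)

lemma eq_of_rootedIso (hG : G.IsAcyclic) (hA : RootedAsymm G X b) (hb : b ∈ X)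
    (hbd : G.Adj b d) (hbe : G.Adj b e)
    (h : RootedIso G (branch G X b d) d (branch G X b e) e) :
    d = e := by
  by_contra hde
  obtain ⟨g, hg, he, hge⟩ := h.symm
  obtain ⟨f, hf, hd, hfd⟩ := h
  set D := branch G X b d
  set E := branch G X b e
  have hbS : b ∈ X \ (D ∪ E) := ⟨hb, not_or_intro notMem_branch notMem_branch⟩
  have hDE := disjoint_compOf_of_ne hG hbd hbe hde
  have hdS : Disjoint (compOf G b d) (X \ (D ∪ E)) :=
    disjoint_compOf_sdiff_branch.mono_right (Set.sdiff_subset_sdiff_right Set.subset_union_left)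
  have heS : Disjoint (compOf G b e) (X \ (D ∪ E)) :=
    disjoint_compOf_sdiff_branch.mono_right (Set.sdiff_subset_sdiff_right Set.subset_union_right)
  obtain ⟨F₁, hF₁, hF₁f, hF₁b⟩ := hf.exists_glue hG (.id (X := X \ (D ∪ E))) hd hbS hbd
    (hfd.symm ▸ hbe) Set.inter_subset_right hdS (hfd.symm ▸ Set.inter_subset_right)
    (hfd.symm ▸ heS)
  have hF₁b : F₁ b = b := hF₁b hbS
  obtain ⟨F, hF, -, hFF₁⟩ := hg.exists_glue hG hF₁ he (.inr hbS) hbe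
    (by rwa [hF₁b, hge]) Set.inter_subset_right
    (Set.disjoint_union_right.2 ⟨hDE.symm.mono_right Set.inter_subset_right, heS⟩)
    (by rw [hF₁b, hge]; exact Set.inter_subset_right)
    (by rw [hF₁b, hge]; exact
      Set.disjoint_union_right.2 ⟨hDE.mono_right Set.inter_subset_right, hdS⟩)
  rw [← Set.union_assoc, ← Set.union_assoc, Set.union_comm E,
    Set.union_sdiff_cancel (Set.union_subset branch_subset branch_subset)] at hF
  have hFd : F d = e := (hFF₁ (.inl hd)).trans ((hF₁f hd).trans hfd)
  exact hde ((hA F hF ((hFF₁ (.inr hbS)).trans hF₁b) hd.1).symm.trans hFd)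

end RootedAsymm

lemma rootedAsymm_of_branches (hG : G.IsAcyclic) (hX : (G.induce X).Connected) (hb : b ∈ X)
    (hA : ∀ e ∈ X, G.Adj b e → RootedAsymm G (branch G X b e) e)
    (hinj : ∀ d ∈ X, ∀ e ∈ X, G.Adj b d → G.Adj b e →
      RootedIso G (branch G X b d) d (branch G X b e) e → d = e) : RootedAsymm G X b := by
  intro f hf hfb y hy
  obtain rfl | hyb := eq_or_ne y b
  · exact hfb
  obtain ⟨e, he, hbe, hye⟩ := exists_mem_branch hX hb hy hyb
  have hfe := hf.branch hG hX hb he hbe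
  rw [hfb] at hfe
  have hefe : e = f e := hinj e he (f e) (hf.bijOn.mapsTo he) hbe
    (hfb ▸ (hf.adj_iff b hb e he).2 hbe) ⟨f, hfe, mem_branch_self he hbe, rfl⟩
  rw [← hefe] at hfe
  exact hA e he hbe f hfe hefe.symm hye

lemma branch_sdiff_singleton_of_ne (hG : G.IsAcyclic) (hbd : G.Adj b d) (hbe : G.Adj b e)
    (hde : d ≠ e) (hx : x ∈ branch G X b d) : branch G (X \ {x}) b e = branch G X b e := by
  rw [branch_sdiff_singleton, Set.sdiff_singleton_eq_self]
  exact fun hx' ↦ hde (compOf_injective_of_adj hG hbd hbe hx.2 hx'.2)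

lemma RootedAsymm.sdiff_singleton {l : V} (hG : G.IsAcyclic) (hA : RootedAsymm G X b)
    (hXl : (G.induce (X \ {l})).Connected) (hb : b ∈ X) (hbe : G.Adj b e)
    (hl : l ∈ branch G X b e)
    (hAe : e ≠ l → RootedAsymm G (branch G X b e \ {l}) e)
    (hne : e ≠ l → ∀ x ∈ X, G.Adj b x → x ≠ e →
      ¬ RootedIso G (branch G X b e \ {l}) e (branch G X b x) x) :
    RootedAsymm G (X \ {l}) b := by
  have hbr {x} (hbx : G.Adj b x) (hx : x ≠ e) := branch_sdiff_singleton_of_ne hG hbe hbx hx.symm hl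
  refine rootedAsymm_of_branches hG hXl ⟨hb, ne_of_mem_of_not_mem hl notMem_branch |>.symm⟩
    (fun x hx hbx ↦ ?_) fun x hx y hy hbx hby hxy ↦ ?_
  · obtain rfl | hxe := eq_or_ne x e
    · exact branch_sdiff_singleton l ▸ hAe hx.2
    · exact hbr hbx hxe ▸ hA.branch hG hb hx.1 hbx
  · obtain rfl | hxe := eq_or_ne x e <;> obtain rfl | hye := eq_or_ne y x
    · rfl
    · rw [branch_sdiff_singleton, hbr hby hye] at hxy
      exact (hne hx.2 y hy.1 hby hye hxy).elim
    · rfl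
    · obtain rfl | hye := eq_or_ne y e
      · rw [branch_sdiff_singleton l (e := y), hbr hbx hxe] at hxy
        exact (hne hy.2 x hx.1 hbx hxe hxy.symm).elim
      · rw [hbr hbx hxe, hbr hby hye] at hxy
        exact hA.eq_of_rootedIso hG hb hbx hby hxy

/-- Deleting `l` from the tree induced by `X` leaves a subtree that still contains the root `b` and
has no nontrivial automorphism fixing `b`. -/
structure IsRemovable (G : SimpleGraph V) (X : Set V) (b l : V) : Prop where
  mem : l ∈ X
  ne : l ≠ b
  connected : (G.induce (X \ {l})).Connected
  rootedAsymm : RootedAsymm G (X \ {l}) b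

lemma isRemovable_of_branch_eq_singleton (hG : G.IsAcyclic) (hX : (G.induce X).Connected)
    (hA : RootedAsymm G X b) (hb : b ∈ X) (he : e ∈ X) (hbe : G.Adj b e)
    (h : branch G X b e = {e}) : IsRemovable G X b e := by
  have hXe : (G.induce (X \ {e})).Connected := by
    rw [← h, sdiff_branch hG hX hb hbe]
    exact connected_branch hG hX hb hbe.symm
  exact ⟨he, hbe.ne', hXe, hA.sdiff_singleton hG hXe hb hbe (mem_branch_self he hbe)
    (fun h ↦ (h rfl).elim) fun h ↦ (h rfl).elim⟩

lemma IsRemovable.of_branch {l : V} (hG : G.IsAcyclic) (hX : (G.induce X).Connected)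
    (hA : RootedAsymm G X b) (hb : b ∈ X) (he : e ∈ X) (hbe : G.Adj b e)
    (hl : IsRemovable G (branch G X b e) e l)
    (hne : ∀ x ∈ X, G.Adj b x → x ≠ e →
      ¬ RootedIso G (branch G X b e \ {l}) e (branch G X b x) x) : IsRemovable G X b l := by
  have hlb : l ≠ b := ne_of_mem_of_not_mem hl.mem notMem_branch
  have hXl : (G.induce (X \ {l})).Connected := by
    have hunion : X \ {l} = branch G X b e \ {l} ∪ branch G X e b := by
      have hleb : l ∉ branch G X e b := sdiff_branch hG hX hb hbe ▸ fun h ↦ h.2 hl.mem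
      rw [← Set.sdiff_singleton_eq_self hleb, ← Set.union_sdiff_distrib,
        ← sdiff_branch hG hX hb hbe, Set.union_sdiff_cancel branch_subset]
    exact hunion ▸ connected_induce_union hl.connected.preconnected
      (connected_branch hG hX hb hbe.symm).preconnected ⟨mem_branch_self he hbe, hl.ne.symm⟩
      (mem_branch_self hb hbe.symm) hbe.symm
  exact ⟨hl.mem.1, hlb, hXl, hA.sdiff_singleton hG hXl hb hbe hl.mem
    (fun _ ↦ hl.rootedAsymm) fun _ ↦ hne⟩

lemma exists_adj_of_two_le_ncard [Finite V] (hX : (G.induce X).Connected) (hb : b ∈ X)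
    (h2 : 2 ≤ X.ncard) : ∃ e ∈ X, G.Adj b e := by
  obtain ⟨y, hy, hyb⟩ := Set.exists_ne_of_one_lt_ncard h2 b
  obtain ⟨e, he, hbe, -⟩ := exists_mem_branch hX hb hy hyb
  exact ⟨e, he, hbe⟩

lemma ncard_branch_lt [Finite V] (hb : b ∈ X) : (branch G X b e).ncard < X.ncard :=
  Set.ncard_lt_ncard ⟨branch_subset, fun h ↦ notMem_branch (h hb)⟩

lemma ncard_branch_pos [Finite V] (he : e ∈ X) (hbe : G.Adj b e) : 0 < (branch G X b e).ncard :=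
  (Set.ncard_pos (Set.toFinite _)).2 ⟨e, mem_branch_self he hbe⟩

lemma branch_eq_singleton [Finite V] (he : e ∈ X) (hbe : G.Adj b e)
    (h : (branch G X b e).ncard ≤ 1) : branch G X b e = {e} :=
  Set.eq_singleton_iff_unique_mem.2 ⟨mem_branch_self he hbe,
    fun _ hx ↦ (Set.ncard_le_one (Set.toFinite _)).1 h _ hx _ (mem_branch_self he hbe)⟩

lemma RootedAsymm.exists_isRemovable [Finite V] (hG : G.IsAcyclic) (hA : RootedAsymm G X b)
    (hX : (G.induce X).Connected) (hb : b ∈ X) (h2 : 2 ≤ X.ncard) : ∃ l, IsRemovable G X b l := by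
  induction hn : X.ncard using Nat.strong_induction_on generalizing X b with | _ n ih
  obtain ⟨e, ⟨he, hbe⟩, hmin⟩ := Set.exists_min_image {e | e ∈ X ∧ G.Adj b e}
    (fun e ↦ (branch G X b e).ncard) (Set.toFinite _)
    (exists_adj_of_two_le_ncard hX hb h2)
  obtain hle | hlt := le_or_gt (branch G X b e).ncard 1
  · exact ⟨e, isRemovable_of_branch_eq_singleton hG hX hA hb he hbe
      (branch_eq_singleton he hbe hle)⟩
  obtain ⟨l, hl⟩ := ih _ (hn ▸ ncard_branch_lt hb) (hA.branch hG hb he hbe)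
    (connected_branch hG hX he hbe) (mem_branch_self he hbe) hlt rfl
  refine ⟨l, .of_branch hG hX hA hb he hbe hl fun x hx hbx _ hiso ↦ ?_⟩
  have hcard := hiso.ncard_eq
  have hxe := hmin x ⟨hx, hbx⟩
  have hel := Set.ncard_sdiff_singleton_lt_of_mem hl.mem
  lia

/-! ### Shifts -/

/-- Deleting some leaf other than the root from the tree `X` rooted at `b` gives the same rooted
tree as deleting the root `d` from the tree `Y` and taking its neighbour `e` as the new root. Thus
`Y` arises from `X` by deleting a leaf and attaching a new root on top. -/
def IsShift (G : SimpleGraph V) (X : Set V) (b : V) (Y : Set V) (d e : V) : Prop :=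
  d ∈ Y ∧ G.Adj d e ∧
    ∃ l ∈ X, l ≠ b ∧ (G.induce (X \ {l})).Connected ∧ RootedIso G (X \ {l}) b (Y \ {d}) e

namespace IsShift

variable {f : V}

lemma mem_root (h : IsShift G X b Y d e) : d ∈ Y := h.1

lemma adj (h : IsShift G X b Y d e) : G.Adj d e := h.2.1

lemma mem (h : IsShift G X b Y d e) : e ∈ Y :=
  let ⟨_, _, _, _, _, _, hiso⟩ := h; hiso.mem_right.1

lemma connected (h : IsShift G X b Y d e) : (G.induce (Y \ {d})).Connected :=
  let ⟨_, _, _, _, _, hXl, hiso⟩ := h; hiso.connected hXl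

lemma ncard_eq [Finite V] (h : IsShift G X b Y d e) : X.ncard = Y.ncard := by
  obtain ⟨hd, -, l, hl, -, -, hiso⟩ := h
  rw [← Set.ncard_sdiff_singleton_add_one hl, ← Set.ncard_sdiff_singleton_add_one hd,
    hiso.ncard_eq]

lemma sdiff_root [Finite V] (hG : G.IsAcyclic) (h : IsShift G X b Y d e)
    (hX : (G.induce (X \ {b})).Connected) (hf : f ∈ X) (hbf : G.Adj b f) (h2 : 2 < X.ncard) :
    ∃ g, IsShift G (X \ {b}) f (Y \ {d}) e g := by
  obtain ⟨-, -, l, hl, hlb, hXl, hiso⟩ := h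
  have hsub : X \ {b} ⊆ compOf G b f :=
    subset_compOf hX (fun h ↦ h.2 rfl) ⟨hf, hbf.ne'⟩ (mem_compOf_self hbf.ne)
  have hfl : f ≠ l := by
    rintro rfl
    have hcard := Set.ncard_sdiff_singleton_of_mem hl
    obtain ⟨x, hx, hbx⟩ := exists_adj_of_two_le_ncard hXl hiso.mem_left (by lia)
    exact hx.2 (eq_of_adj_of_mem_compOf hG hbf hbx (hsub ⟨hx.1, hbx.ne'⟩))
  obtain ⟨g, heg, hiso'⟩ := hiso.sdiff_root ⟨hf, hfl⟩ hbf
  have hbranch : branch G (X \ {l}) b f = (X \ {l}) \ {b} :=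
    Set.Subset.antisymm (fun x hx ↦ ⟨hx.1, ne_of_mem_of_not_mem hx notMem_branch⟩)
      fun x hx ↦ ⟨hx.1, hsub ⟨hx.1.1, hx.2⟩⟩
  have hconn := hbranch ▸ connected_branch hG hXl ⟨hf, hfl⟩ hbf
  rw [Set.sdiff_sdiff_comm] at hconn hiso'
  exact ⟨g, ⟨hiso.mem_right, heg, l, ⟨hl, hlb⟩, hfl.symm, hconn, hiso'⟩⟩

lemma rootedIso [Finite V] (hG : G.IsAcyclic) (h : IsShift G X b Y d e)
    (h' : IsShift G Y d X b f) : RootedIso G X b Y d := by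
  induction hn : X.ncard using Nat.strong_induction_on generalizing X Y b d e f with | _ n ih
  refine .of_sdiff_root hG ?_ h'.connected h'.mem_root h.mem_root h'.adj h.adj
  have hXb := Set.ncard_sdiff_singleton_add_one h'.mem_root
  have hYd := Set.ncard_sdiff_singleton_add_one h.mem_root
  have hXY := h.ncard_eq
  obtain h2 | h2 := lt_or_ge 2 X.ncard
  · obtain ⟨g, hg⟩ := h.sdiff_root hG h'.connected h'.mem h'.adj h2
    obtain ⟨g', hg'⟩ := h'.sdiff_root hG h.connected h.mem h.adj (by lia)
    exact ih _ (by lia) hg hg' rfl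
  · have hf : f ∈ X \ {b} := ⟨h'.mem, h'.adj.ne'⟩
    have he : e ∈ Y \ {d} := ⟨h.mem, h.adj.ne'⟩
    have hXpos := Set.ncard_pos (Set.toFinite _) |>.2 ⟨f, hf⟩
    exact .of_ncard_eq_one hf he (by lia) (by lia)

end IsShift

/-! ### Centroids -/

lemma branch_subset_branch_sdiff (hG : G.IsAcyclic) (hX : (G.induce X).Connected) (hd : d ∈ X)
    (hcd : G.Adj c d) (hde : G.Adj d e) (hce : c ≠ e) :
    branch G X d e ⊆ branch G X c d \ {d} := by
  rw [← sdiff_branch hG hX hd hcd.symm]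
  refine fun x hx ↦ ⟨⟨hx.1, fun hxc ↦ ?_⟩, ne_of_mem_of_not_mem hx notMem_branch⟩
  exact hce (compOf_injective_of_adj hG hcd.symm hde hxc.2 hx.2)

lemma disjoint_branch (hG : G.IsAcyclic) (hbd : G.Adj b d) (hbe : G.Adj b e) (hde : d ≠ e) :
    Disjoint (branch G X b d) (branch G X b e) :=
  (disjoint_compOf_of_ne hG hbd hbe hde).mono Set.inter_subset_right Set.inter_subset_right

lemma ncard_branch_add_lt [Finite V] (hG : G.IsAcyclic) (hb : b ∈ X) (hbd : G.Adj b d)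
    (hbe : G.Adj b e) (hde : d ≠ e) :
    (branch G X b d).ncard + (branch G X b e).ncard < X.ncard := by
  rw [← Set.ncard_union_eq (disjoint_branch hG hbd hbe hde)]
  exact Set.ncard_lt_ncard ⟨Set.union_subset branch_subset branch_subset,
    fun h ↦ (h hb).elim notMem_branch notMem_branch⟩

/-- `c` is a centroid of the tree induced by `X`: no branch at `c` contains more than half of the
vertices. -/
structure IsCentroid (G : SimpleGraph V) (X : Set V) (c : V) : Prop where
  mem : c ∈ X
  two_mul_ncard_branch_le : ∀ e ∈ X, G.Adj c e → 2 * (branch G X c e).ncard ≤ X.ncard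

lemma exists_isCentroid [Finite V] (hG : G.IsAcyclic) (hX : (G.induce X).Connected) :
    ∃ c, IsCentroid G X c := by
  by_contra! hnot
  have hheavy : ∀ c ∈ X, ∃ e ∈ X, G.Adj c e ∧ X.ncard < 2 * (branch G X c e).ncard := by
    intro c hc
    by_contra! hle
    exact hnot c ⟨hc, hle⟩
  obtain ⟨c₀, hc₀⟩ := hX.nonempty
  obtain ⟨e₀, he₀, hce₀, hlt₀⟩ := hheavy c₀ hc₀
  obtain ⟨⟨c, e⟩, ⟨hc, he, hce, hlt⟩, hmin⟩ := Set.exists_min_image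
    {p : V × V | p.1 ∈ X ∧ p.2 ∈ X ∧ G.Adj p.1 p.2 ∧ X.ncard < 2 * (branch G X p.1 p.2).ncard}
    (fun p ↦ (branch G X p.1 p.2).ncard) (Set.toFinite _) ⟨(c₀, e₀), hc₀, he₀, hce₀, hlt₀⟩
  obtain ⟨x, hx, hex, hltx⟩ := hheavy e he
  obtain rfl | hcx := eq_or_ne c x
  · have := ncard_branch_add hG hX hc hce
    lia
  · have hle := Set.ncard_le_ncard (branch_subset_branch_sdiff hG hX he hce hex hcx)
    have hlt := Set.ncard_sdiff_singleton_lt_of_mem (mem_branch_self he hce)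
    have := hmin (e, x) ⟨he, hx, hex, hltx⟩
    lia

namespace IsCentroid

lemma map [Finite V] {f : V → V} (hG : G.IsAcyclic) (hX : (G.induce X).Connected)
    (hf : IsoOn G f X Y) (hc : IsCentroid G X c) : IsCentroid G Y (f c) := by
  refine ⟨hf.bijOn.mapsTo hc.mem, fun y hy hcy ↦ ?_⟩
  obtain ⟨x, hx, rfl⟩ := hf.bijOn.surjOn hy
  have hcx := (hf.adj_iff c hc.mem x hx).1 hcy
  have hbranch : RootedIso G (branch G X c x) x (branch G Y (f c) (f x)) (f x) :=
    ⟨f, hf.branch hG hX hc.mem hx hcx, mem_branch_self hx hcx, rfl⟩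
  have hXY : RootedIso G X c Y (f c) := ⟨f, hf, hc.mem, rfl⟩
  rw [← hbranch.ncard_eq, ← hXY.ncard_eq]
  exact hc.two_mul_ncard_branch_le x hx hcx

lemma adj_of_ne [Finite V] (hG : G.IsAcyclic) (hX : (G.induce X).Connected)
    (hc : IsCentroid G X c) (hd : IsCentroid G X d) (hcd : c ≠ d) : G.Adj c d := by
  obtain ⟨e, he, hce, hde⟩ := exists_mem_branch hX hc.mem hd.mem hcd.symm
  obtain ⟨x, hx, hdx, hcx⟩ := exists_mem_branch hX hd.mem hc.mem hcd
  by_contra hnadj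
  have hed : e ≠ d := by
    rintro rfl
    exact hnadj hce
  have hsub : branch G X e c ⊆ branch G X d x := by
    have hdec : d ∉ branch G X e c := sdiff_branch hG hX hc.mem hce ▸ fun h ↦ h.2 hde
    exact Set.subset_inter branch_subset <| subset_compOf (connected_branch hG hX hc.mem hce.symm)
      hdec (mem_branch_self hc.mem hce.symm) hcx.2
  have hex : e ∈ branch G X d x := ⟨he, mem_compOf_of_adj hcx.2 hce hed⟩
  have hlt := Set.ncard_lt_ncard ⟨hsub, fun h ↦ notMem_branch (h hex)⟩
  have hadd := ncard_branch_add hG hX hc.mem hce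
  have hle_c := hc.two_mul_ncard_branch_le e he hce
  have hle_d := hd.two_mul_ncard_branch_le x hx hdx
  lia

lemma exists_rootedIso [Finite V] (hG : G.IsAcyclic) (hX : (G.induce X).Connected)
    (hc : IsCentroid G X c) (hA : RootedAsymm G X c) (hnot : ¬ AutFree (G.induce X)) :
    ∃ d ∈ X, G.Adj c d ∧ 2 * (branch G X c d).ncard = X.ncard ∧
      RootedIso G (branch G X c d) d (branch G X d c) c := by
  rw [autFree_induce_iff] at hnot
  push Not at hnot
  obtain ⟨f, hf, hfid⟩ := hnot
  have hd := hc.map hG hX hf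
  set d := f c
  have hcd : G.Adj c d := hc.adj_of_ne hG hX hd fun h ↦ hfid (hA f hf h.symm)
  have hdfd : G.Adj d (f d) := (hf.adj_iff c hc.mem d hd.mem).2 hcd
  have hbranch := hf.branch hG hX hc.mem hd.mem hcd
  have hiso : RootedIso G (branch G X c d) d (branch G X d (f d)) (f d) :=
    ⟨f, hbranch, mem_branch_self hd.mem hcd, rfl⟩
  have hadd := ncard_branch_add hG hX hc.mem hcd
  have hle_c := hc.two_mul_ncard_branch_le d hd.mem hcd
  have hle_d := hd.two_mul_ncard_branch_le c hc.mem hcd.symm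
  have hfdc : f d = c := by
    by_contra hne
    have hlt := ncard_branch_add_lt hG hd.mem hdfd hcd.symm hne
    have hcard := hiso.ncard_eq
    lia
  rw [hfdc] at hiso
  exact ⟨d, hd.mem, hcd, by lia, hiso⟩

end IsCentroid

/-! ### Minimal automorphism-free trees -/

lemma exists_third_branch [Finite V] (hG : G.IsAcyclic) (hX : (G.induce X).Connected) (hc : c ∈ X)
    (hcd : G.Adj c d) (hce : G.Adj c e) (hde : d ≠ e)
    (hcard : (branch G X c d).ncard + (branch G X c e).ncard + 2 = X.ncard) :
    ∃ x ∈ X, G.Adj c x ∧ x ≠ d ∧ x ≠ e ∧ (branch G X c x).ncard = 1 ∧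
      ∀ y ∈ X, G.Adj c y → y = d ∨ y = e ∨ y = x := by
  set S := X \ (branch G X c d ∪ branch G X c e)
  have hcS : c ∈ S := ⟨hc, not_or_intro notMem_branch notMem_branch⟩
  have hS : (S \ {c}).ncard = 1 := by
    have hdisj := Set.ncard_union_eq (disjoint_branch (X := X) hG hcd hce hde)
    have hsdiff := Set.ncard_sdiff_add_ncard_of_subset
      (Set.union_subset branch_subset branch_subset :
        branch G X c d ∪ branch G X c e ⊆ X)
    have := Set.ncard_sdiff_singleton_of_mem hcS
    lia
  obtain ⟨x, hSx⟩ := Set.ncard_eq_one.1 hS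
  have hbranch : ∀ y ∈ X, G.Adj c y → y ≠ d → y ≠ e → branch G X c y ⊆ {x} :=
    fun y _ hcy hyd hye z hz ↦ hSx ▸ ⟨⟨hz.1, not_or_intro
      ((disjoint_branch hG hcy hcd hyd).notMem_of_mem_left hz)
      ((disjoint_branch hG hcy hce hye).notMem_of_mem_left hz)⟩,
      ne_of_mem_of_not_mem hz notMem_branch⟩
  have hxS : x ∈ S \ {c} := hSx ▸ rfl
  obtain ⟨y, hy, hcy, hxy⟩ := exists_mem_branch hX hc hxS.1.1 hxS.2
  have hyd : y ≠ d := fun h ↦ hxS.1.2 (.inl (h ▸ hxy))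
  have hye : y ≠ e := fun h ↦ hxS.1.2 (.inr (h ▸ hxy))
  obtain rfl : y = x := hbranch y hy hcy hyd hye (mem_branch_self hy hcy)
  refine ⟨y, hy, hcy, hyd, hye, ?_, fun z hz hcz ↦ ?_⟩
  · rw [(hbranch y hy hcy hyd hye).antisymm (Set.singleton_subset_iff.2 hxy),
      Set.ncard_singleton]
  · by_contra! hne
    exact hne.2.2 (hbranch z hz hcz hne.1 hne.2.1 (mem_branch_self hz hcz))

lemma RootedIso.eq_of_sdiff_singleton {k : V} (h : RootedIso G (X \ {k}) c (X \ {x}) c)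
    (hd : d ∈ X) (hx : x ∈ X) (hcd : G.Adj c d) (hcx : G.Adj c x) (hdk : d ≠ k) (hxk : x ≠ k)
    (hadj : ∀ y ∈ X, G.Adj c y → y = d ∨ y = x) : d = x := by
  obtain ⟨f, hf, hc, hfc⟩ := h
  have hfd {y} (hy : y ∈ X \ {k}) (hcy : G.Adj c y) : f y = d := by
    have hcfy := (hf.adj_iff c hc y hy).2 hcy
    rw [hfc] at hcfy
    exact (hadj _ (hf.bijOn.mapsTo hy).1 hcfy).resolve_right (hf.bijOn.mapsTo hy).2
  exact hf.bijOn.injOn ⟨hd, hdk⟩ ⟨hx, hxk⟩ ((hfd ⟨hd, hdk⟩ hcd).trans (hfd ⟨hx, hxk⟩ hcx).symm)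

/-- The subgraph of `G` induced by `X`, a tree when `G` is acyclic, is automorphism-free, and
deleting a leaf always destroys this. Leaves are encoded as the vertices whose deletion leaves a
connected graph. -/
structure IsMinimalAutFree (G : SimpleGraph V) (X : Set V) : Prop where
  connected : (G.induce X).Connected
  two_le_ncard : 2 ≤ X.ncard
  autFree : AutFree (G.induce X)
  not_autFree_sdiff : ∀ l ∈ X, (G.induce (X \ {l})).Connected → ¬ AutFree (G.induce (X \ {l}))

namespace IsMinimalAutFree

lemma rootedAsymm (hX : IsMinimalAutFree G X) : RootedAsymm G X b :=
  rootedAsymm_of_autFree hX.autFree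

variable {l : V} [Finite V]

lemma exists_rootedIso (hG : G.IsAcyclic) (hX : IsMinimalAutFree G X) (hl : IsRemovable G X c l)
    (hc : IsCentroid G (X \ {l}) c) :
    ∃ d ∈ X, G.Adj c d ∧ 2 * (branch G X c d \ {l}).ncard + 1 = X.ncard ∧
      RootedIso G (branch G X c d \ {l}) d (branch G X d c \ {l}) c := by
  obtain ⟨d, hd, hcd, hcard, hiso⟩ := hc.exists_rootedIso hG hl.connected hl.rootedAsymm
    (hX.not_autFree_sdiff l hl.mem hl.connected)
  rw [branch_sdiff_singleton] at hcard hiso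
  rw [branch_sdiff_singleton] at hiso
  exact ⟨d, hd.1, hcd, by rw [hcard, Set.ncard_sdiff_singleton_add_one hl.mem], hiso⟩

lemma exists_le_ncard_branch_sdiff (hG : G.IsAcyclic) (hX : IsMinimalAutFree G X) (hc : c ∈ X)
    (hl : IsRemovable G X c l) :
    ∃ e ∈ X, G.Adj c e ∧ X.ncard ≤ 2 * (branch G X c e \ {l}).ncard + 1 := by
  by_contra! hlt
  have hXl := Set.ncard_sdiff_singleton_add_one hl.mem
  obtain ⟨d, hd, hcd, hcard, -⟩ := hX.exists_rootedIso hG hl ⟨⟨hc, hl.ne.symm⟩, fun e he hce ↦ by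
    have := hlt e he.1 hce
    rw [branch_sdiff_singleton]
    lia⟩
  exact (hlt d hd hcd).ne hcard

lemma rootedIso_of_isRemovable (hG : G.IsAcyclic) (hX : IsMinimalAutFree G X) (hc : c ∈ X)
    (hce : G.Adj c e) (hcard : 2 * (branch G X c e).ncard + 1 = X.ncard)
    (hl : IsRemovable G X c l) (hle : l ∉ branch G X c e)
    (hlt : ∀ x ∈ X, G.Adj c x → x ≠ e → 2 * (branch G X c x \ {l}).ncard + 1 < X.ncard) :
    RootedIso G (branch G X c e) e (branch G X e c \ {l}) c := by
  have hbranch : branch G X c e \ {l} = branch G X c e := Set.sdiff_singleton_eq_self hle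
  have hXl := Set.ncard_sdiff_singleton_add_one hl.mem
  obtain ⟨d, hd, hcd, hd_card, hiso⟩ := hX.exists_rootedIso hG hl
    ⟨⟨hc, hl.ne.symm⟩, fun x hx hcx ↦ by
      rw [branch_sdiff_singleton]
      obtain rfl | hxe := eq_or_ne x e
      · rw [hbranch]
        lia
      · have := hlt x hx.1 hcx hxe
        lia⟩
  obtain rfl : d = e := by_contra fun hde ↦ (hlt d hd hcd hde).ne hd_card
  rwa [hbranch] at hiso

lemma exists_isRemovable_branch (hG : G.IsAcyclic) (hX : IsMinimalAutFree G X) (hc : c ∈ X)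
    (he : e ∈ X) (hce : G.Adj c e) (h2 : 2 ≤ (branch G X c e).ncard) :
    ∃ l, IsRemovable G (branch G X c e) e l :=
  (hX.rootedAsymm.branch hG hc he hce).exists_isRemovable hG
    (connected_branch hG hX.connected he hce) (mem_branch_self he hce) h2

lemma exists_rootedIso_branch_sdiff (hG : G.IsAcyclic) (hX : IsMinimalAutFree G X) (hc : c ∈ X)
    (he : e ∈ X) (hce : G.Adj c e) (h2 : 2 ≤ (branch G X c e).ncard)
    (hle : 2 * (branch G X c e).ncard ≤ X.ncard)
    (hlt : ∀ x ∈ X, G.Adj c x → x ≠ e → 2 * (branch G X c x).ncard + 1 < X.ncard) :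
    ∃ l, IsRemovable G (branch G X c e) e l ∧ ∃ x ∈ X, G.Adj c x ∧ x ≠ e ∧
      RootedIso G (branch G X c e \ {l}) e (branch G X c x) x := by
  obtain ⟨l, hl⟩ := hX.exists_isRemovable_branch hG hc he hce h2
  refine ⟨l, hl, ?_⟩
  by_contra! hne
  obtain ⟨x, hx, hcx, hx_le⟩ := hX.exists_le_ncard_branch_sdiff hG hc
    (hl.of_branch hG hX.connected hX.rootedAsymm hc he hce hne)
  obtain rfl | hxe := eq_or_ne x e
  · have := Set.ncard_sdiff_singleton_add_one hl.mem
    lia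
  · have := Set.ncard_sdiff_singleton_le (branch G X c x) l
    have := hlt x hx hcx hxe
    lia

lemma exists_isShift_of_half (hG : G.IsAcyclic) (hX : IsMinimalAutFree G X) (hc : c ∈ X)
    (hd : d ∈ X) (hcd : G.Adj c d) (hcard : (branch G X c d).ncard = (branch G X d c).ncard)
    (h2 : 2 ≤ (branch G X d c).ncard) :
    ∃ e, IsShift G (branch G X d c) c (branch G X c d) d e := by
  have hadd := ncard_branch_add hG hX.connected hc hcd
  have hdcd := mem_branch_self hd hcd
  have hcd_card := Set.ncard_sdiff_singleton_add_one hdcd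
  have hsub : ∀ x, G.Adj d x → x ≠ c → branch G X d x ⊆ branch G X c d \ {d} :=
    fun x hdx hxc ↦ branch_subset_branch_sdiff hG hX.connected hd hcd hdx hxc.symm
  obtain ⟨l, hl, x, -, hdx, hxc, hiso⟩ := hX.exists_rootedIso_branch_sdiff hG hd hc hcd.symm h2
    (by lia) fun x _ hdx hxc ↦ by
      have := Set.ncard_le_ncard (hsub x hdx hxc)
      lia
  have hl_card := Set.ncard_sdiff_singleton_add_one hl.mem
  rw [Set.eq_of_subset_of_ncard_le (hsub x hdx hxc) (by have := hiso.ncard_eq; lia)] at hiso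
  exact ⟨x, hdcd, hdx, l, hl.mem, hl.ne, hl.connected, hiso⟩

lemma ncard_branch_ne (hG : G.IsAcyclic) (hX : IsMinimalAutFree G X) (hc : c ∈ X) (hd : d ∈ X)
    (hcd : G.Adj c d) : (branch G X c d).ncard ≠ (branch G X d c).ncard := by
  intro hcard
  refine not_rootedIso_of_adj hG hX.connected hX.autFree hc hcd ?_
  obtain h1 | h2 := le_or_gt (branch G X d c).ncard 1
  · have := ncard_branch_pos hc hcd.symm
    exact .of_ncard_eq_one (mem_branch_self hd hcd) (mem_branch_self hc hcd.symm) (by lia) (by lia)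
  · obtain ⟨e, he⟩ := hX.exists_isShift_of_half hG hd hc hcd.symm hcard.symm (by lia)
    obtain ⟨f, hf⟩ := hX.exists_isShift_of_half hG hc hd hcd hcard h2
    exact he.rootedIso hG hf

lemma exists_two_mul_ncard_branch_add_one (hG : G.IsAcyclic) (hX : IsMinimalAutFree G X) :
    ∃ c ∈ X, ∃ e ∈ X, G.Adj c e ∧ 2 * (branch G X c e).ncard + 1 = X.ncard := by
  obtain ⟨c, hc⟩ := exists_isCentroid hG hX.connected
  obtain ⟨l, hl⟩ := hX.rootedAsymm.exists_isRemovable hG hX.connected hc.mem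
    hX.two_le_ncard
  obtain ⟨e, he, hce, hle⟩ := hX.exists_le_ncard_branch_sdiff hG hc.mem hl
  have hl_card := Set.ncard_sdiff_singleton_le (branch G X c e) l
  have he_card := hc.two_mul_ncard_branch_le e he hce
  have hne := hX.ncard_branch_ne hG hc.mem he hce
  have hadd := ncard_branch_add hG hX.connected hc.mem hce
  exact ⟨c, hc.mem, e, he, hce, by lia⟩

lemma exists_isShift_of_ncard_branch_eq (hG : G.IsAcyclic) (hX : IsMinimalAutFree G X)
    (hc : c ∈ X) (hd : d ∈ X) (he : e ∈ X) (hcd : G.Adj c d) (hce : G.Adj c e) (hde : d ≠ e)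
    (hd_card : 2 * (branch G X c d).ncard + 1 = X.ncard)
    (he_card : 2 * (branch G X c e).ncard + 1 = X.ncard) (h2 : 2 ≤ (branch G X c e).ncard) :
    ∃ x, IsShift G (branch G X c e) e (branch G X c d) d x := by
  have hadd := ncard_branch_add hG hX.connected hc hcd
  have hcdc := mem_branch_self hc hcd.symm
  have hdc_card := Set.ncard_sdiff_singleton_add_one hcdc
  have hbranch : branch G X c e = branch G X d c \ {c} := Set.eq_of_subset_of_ncard_le
    (branch_subset_branch_sdiff hG hX.connected hc hcd.symm hce hde) (by lia)
  have heq : ∀ x ∈ X, G.Adj c x → x ≠ d → x = e := fun x hx hcx hxd ↦ by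
    have hxe : x ∈ branch G X c e := hbranch ▸ branch_subset_branch_sdiff hG hX.connected hc
      hcd.symm hcx hxd.symm (mem_branch_self hx hcx)
    exact eq_of_adj_of_mem_compOf hG hce hcx hxe.2
  obtain ⟨l, hl⟩ := hX.exists_isRemovable_branch hG hc he hce h2
  have hl_card := Set.ncard_sdiff_singleton_add_one hl.mem
  have hlX : IsRemovable G X c l := hl.of_branch hG hX.connected
    hX.rootedAsymm hc he hce fun x hx hcx hxe hiso ↦ by
      obtain rfl : x = d := by_contra fun hxd ↦ hxe (heq x hx hcx hxd)
      have := hiso.ncard_eq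
      lia
  have hiso := hX.rootedIso_of_isRemovable hG hc hcd hd_card hlX
    ((disjoint_branch hG hce hcd hde.symm).notMem_of_mem_left hl.mem) fun x hx hcx hxd ↦ by
      obtain rfl := heq x hx hcx hxd
      lia
  have hedc : e ∈ branch G X d c := (hbranch ▸ mem_branch_self he hce).1
  obtain ⟨x, hdx, hiso'⟩ := hiso.symm.sdiff_root ⟨hedc, hl.ne.symm⟩ hce
  rw [Set.sdiff_sdiff_comm, ← hbranch] at hiso'
  exact ⟨x, mem_branch_self hd hcd, hdx, l, hl.mem, hl.ne, hl.connected, hiso'⟩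

lemma ncard_branch_lt_of_ne (hG : G.IsAcyclic) (hX : IsMinimalAutFree G X) (hc : c ∈ X)
    (hd : d ∈ X) (he : e ∈ X) (hcd : G.Adj c d) (hce : G.Adj c e) (hde : d ≠ e)
    (hcard : 2 * (branch G X c e).ncard + 1 = X.ncard) :
    (branch G X c d).ncard < (branch G X c e).ncard := by
  have hlt := ncard_branch_add_lt hG hc hcd hce hde
  refine lt_of_le_of_ne (by lia) fun heq ↦ hde <|
    hX.rootedAsymm.eq_of_rootedIso hG hc hcd hce ?_
  obtain h1 | h2 := le_or_gt (branch G X c e).ncard 1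
  · have := ncard_branch_pos he hce
    exact .of_ncard_eq_one (mem_branch_self hd hcd) (mem_branch_self he hce) (by lia) (by lia)
  · obtain ⟨x, hx⟩ := hX.exists_isShift_of_ncard_branch_eq hG hc he hd hce hcd hde.symm hcard
      (by lia) (by lia)
    obtain ⟨y, hy⟩ := hX.exists_isShift_of_ncard_branch_eq hG hc hd he hcd hce hde (by lia)
      hcard h2
    exact hx.rootedIso hG hy

lemma two_le_ncard_branch (hG : G.IsAcyclic) (hX : IsMinimalAutFree G X) (hc : c ∈ X)
    (he : e ∈ X) (hce : G.Adj c e) (hcard : 2 * (branch G X c e).ncard + 1 = X.ncard) :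
    2 ≤ (branch G X c e).ncard := by
  have hadd := ncard_branch_add hG hX.connected hc hce
  have hpos := ncard_branch_pos he hce
  obtain ⟨x, hx, hcx⟩ := exists_adj_of_two_le_ncard
    (connected_branch hG hX.connected hc hce.symm) (mem_branch_self hc hce.symm) (by lia)
  have hxe : x ≠ e := ne_of_mem_of_not_mem hx notMem_branch
  have := hX.ncard_branch_lt_of_ne hG hc hx.1 he hcx hce hxe hcard
  have := ncard_branch_pos hx.1 hcx
  lia

lemma exists_ncard_branch_add_one (hG : G.IsAcyclic) (hX : IsMinimalAutFree G X) (hc : c ∈ X)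
    (he : e ∈ X) (hce : G.Adj c e) (hcard : 2 * (branch G X c e).ncard + 1 = X.ncard) :
    ∃ d ∈ X, G.Adj c d ∧ d ≠ e ∧ (branch G X c d).ncard + 1 = (branch G X c e).ncard := by
  obtain ⟨l, hl, d, hd, hcd, hde, hiso⟩ := hX.exists_rootedIso_branch_sdiff hG hc he hce
    (hX.two_le_ncard_branch hG hc he hce hcard) (by lia) fun x hx hcx hxe ↦ by
      have := hX.ncard_branch_lt_of_ne hG hc hx he hcx hce hxe hcard
      lia
  exact ⟨d, hd, hcd, hde, hiso.ncard_eq ▸ Set.ncard_sdiff_singleton_add_one hl.mem⟩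

lemma ncard_branch_le_three (hG : G.IsAcyclic) (hX : IsMinimalAutFree G X) (hc : c ∈ X)
    (hd : d ∈ X) (he : e ∈ X) (hx : x ∈ X) (hcd : G.Adj c d) (hce : G.Adj c e) (hcx : G.Adj c x)
    (hde : d ≠ e) (hxd : x ≠ d) (hxe : x ≠ e)
    (hadj : ∀ y ∈ X, G.Adj c y → y = e ∨ y = d ∨ y = x)
    (he_card : 2 * (branch G X c e).ncard + 1 = X.ncard)
    (hd_card : (branch G X c d).ncard + 1 = (branch G X c e).ncard)
    (hx_card : (branch G X c x).ncard = 1) : (branch G X c e).ncard ≤ 3 := by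
  by_contra! h4
  have hiso {l} (hl : IsRemovable G X c l) (hle : l ∉ branch G X c e) :
      RootedIso G (branch G X c e) e (branch G X e c \ {l}) c :=
    hX.rootedIso_of_isRemovable hG hc hce he_card hl hle fun y hy hcy hye ↦ by
      have := hX.ncard_branch_lt_of_ne hG hc hy he hcy hce hye he_card
      have := Set.ncard_sdiff_singleton_le (branch G X c y) l
      lia
  have hxX : IsRemovable G X c x := isRemovable_of_branch_eq_singleton hG hX.connected
    hX.rootedAsymm hc hx hcx (branch_eq_singleton hx hcx hx_card.le)
  obtain ⟨k, hk⟩ := hX.exists_isRemovable_branch hG hc hd hcd (by lia)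
  have hk_card := Set.ncard_sdiff_singleton_add_one hk.mem
  have hkX : IsRemovable G X c k := hk.of_branch hG hX.connected hX.rootedAsymm hc hd hcd
    fun y hy hcy hyd hkd ↦ by
      have := hkd.ncard_eq
      obtain rfl | rfl | rfl := hadj y hy hcy
      · lia
      · exact hyd rfl
      · lia
  have hmem {y} (hy : y ∈ X) (hcy : G.Adj c y) (hye : y ≠ e) : y ∈ branch G X e c :=
    sdiff_branch hG hX.connected hc hce ▸
      ⟨hy, fun h ↦ hye (eq_of_adj_of_mem_compOf hG hce hcy h.2)⟩
  have hkx : x ≠ k := by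
    rintro rfl
    exact hxd (eq_of_adj_of_mem_compOf hG hcd hcx hk.mem.2)
  have hkiso := hiso hkX ((disjoint_branch hG hcd hce hde).notMem_of_mem_left hk.mem)
  have hxiso := hiso hxX fun h ↦ hxe (eq_of_adj_of_mem_compOf hG hce hcx h.2)
  refine hxd ((hkiso.symm.trans hxiso).eq_of_sdiff_singleton (hmem hd hcd hde) (hmem hx hcx hxe)
    hcd hcx hk.ne.symm hkx fun y hy hcy ↦ ?_).symm
  exact (hadj y hy.1 hcy).resolve_left (ne_of_mem_of_not_mem hy notMem_branch)

theorem exists_branches (hG : G.IsAcyclic) (hX : IsMinimalAutFree G X) :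
    ∃ c ∈ X, ∃ x₁ ∈ X, ∃ x₂ ∈ X, ∃ x₃ ∈ X, G.Adj c x₁ ∧ G.Adj c x₂ ∧ G.Adj c x₃ ∧
      (branch G X c x₁).ncard = 1 ∧ (branch G X c x₂).ncard = 2 ∧ (branch G X c x₃).ncard = 3 ∧
      ∀ y ∈ X, G.Adj c y → y = x₁ ∨ y = x₂ ∨ y = x₃ := by
  obtain ⟨c, hc, e, he, hce, he_card⟩ := hX.exists_two_mul_ncard_branch_add_one hG
  obtain ⟨d, hd, hcd, hde, hd_card⟩ := hX.exists_ncard_branch_add_one hG hc he hce he_card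
  obtain ⟨x, hx, hcx, hxe, hxd, hx_card, hadj⟩ :=
    exists_third_branch hG hX.connected hc hce hcd hde.symm (by lia)
  have hle := hX.ncard_branch_le_three hG hc hd he hx hcd hce hcx hde hxd hxe hadj he_card hd_card
    hx_card
  have hne : (branch G X c d).ncard ≠ 1 := fun h ↦ hxd <|
    hX.rootedAsymm.eq_of_rootedIso hG hc hcx hcd <|
      .of_ncard_eq_one (mem_branch_self hx hcx) (mem_branch_self hd hcd) hx_card h
  have hpos := ncard_branch_pos hd hcd
  refine ⟨c, hc, x, hx, d, hd, e, he, hcx, hcd, hce, hx_card, by lia, by lia, fun y hy hcy ↦ ?_⟩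
  obtain rfl | rfl | rfl := hadj y hy hcy <;> simp

end IsMinimalAutFree

lemma autFree_of_iso {W : Type*} {H : SimpleGraph W} (φ : G ≃g H) (h : AutFree G) : AutFree H :=
  fun ψ w ↦ by simpa using congrArg φ (h (φ.symm.comp (ψ.comp φ)) (φ.symm w))

lemma isLeaf_of_connected_induce [Nontrivial V] {l : V} (hG : G.IsTree)
    (hl : (G.induce {x | x ≠ l}).Connected) : IsLeaf G l := by
  obtain ⟨e, hle⟩ := hG.connected.preconnected.exists_adj_of_nontrivial l
  refine Set.ncard_eq_one.2 ⟨e, Set.eq_singleton_iff_unique_mem.2 ⟨hle, fun y hly ↦ ?_⟩⟩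
  exact eq_of_adj_of_mem_compOf hG.isAcyclic hle hly
    (subset_compOf hl (fun h ↦ h rfl) hle.ne' (mem_compOf_self hle.ne) hly.ne')

lemma isMinimalAutFree_univ [Fintype V] (hG : G.IsTree) (h2 : 2 ≤ Fintype.card V)
    (hA : AutFree G) (hmin : ∀ l, IsLeaf G l → ¬ AutFree (G.induce {x | x ≠ l})) :
    IsMinimalAutFree G .univ := by
  have := Fintype.one_lt_card_iff_nontrivial.1 h2
  refine ⟨(induceUnivIso G).connected_iff.2 hG.connected, ?_,
    autFree_of_iso (induceUnivIso G).symm hA, fun l _ ↦ ?_⟩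
  · rwa [Set.ncard_univ, Nat.card_eq_fintype_card]
  · rw [← Set.compl_eq_univ_sdiff]
    exact fun hl ↦ hmin l (isLeaf_of_connected_induce hG hl)

/-! ### Small branches are paths -/

lemma exists_pathGraph_embedding_cons {n : ℕ} (u : pathGraph (n + 1) ↪g G)
    (hc : c ∉ Set.range u) (hadj : ∀ i, G.Adj c (u i) ↔ i = 0) :
    ∃ v : pathGraph (n + 2) ↪g G, v 0 = c ∧ Set.range v = insert c (Set.range u) := by
  refine ⟨⟨⟨Fin.cons c u, Fin.cons_injective_iff.2 ⟨hc, u.injective⟩⟩, fun {i j} ↦ ?_⟩, rfl,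
    Fin.range_cons c u⟩
  cases i using Fin.cases with
  | zero =>
    cases j using Fin.cases with
    | zero => simp
    | succ j => simp [pathGraph_adj, hadj]
  | succ i =>
    cases j using Fin.cases with
    | zero => simp [pathGraph_adj, G.adj_comm (u i), hadj]
    | succ j => simp [pathGraph_adj]

lemma exists_pathGraph_embedding_insert (hG : G.IsAcyclic) (hce : G.Adj c e) {n : ℕ}
    (u : pathGraph (n + 1) ↪g G) (hu : Set.range u ⊆ compOf G c e) (hu0 : u 0 = e) :
    ∃ v : pathGraph (n + 2) ↪g G, v 0 = c ∧ Set.range v = insert c (Set.range u) := by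
  refine exists_pathGraph_embedding_cons u (fun h ↦ notMem_compOf (hu h)) fun i ↦ ⟨fun h ↦ ?_, ?_⟩
  · exact u.injective ((eq_of_adj_of_mem_compOf hG hce h (hu ⟨i, rfl⟩)).trans hu0.symm)
  · rintro rfl
    exact hu0.symm ▸ hce

lemma RootedAsymm.branch_eq_sdiff_root [Finite V] (hG : G.IsAcyclic) (hA : RootedAsymm G X b)
    (hX : (G.induce X).Connected) (hb : b ∈ X) (h3 : X.ncard ≤ 3) (he : e ∈ X)
    (hbe : G.Adj b e) : branch G X b e = X \ {b} := by
  refine Set.Subset.antisymm (Set.subset_sdiff_singleton branch_subset notMem_branch)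
    fun y ⟨hy, hyb⟩ ↦ ?_
  obtain ⟨d, hd, hbd, hyd⟩ := exists_mem_branch hX hb hy hyb
  suffices d = e from this ▸ hyd
  by_contra hde
  have hlt := ncard_branch_add_lt hG hb hbd hbe hde
  have hdpos := ncard_branch_pos hd hbd
  have hepos := ncard_branch_pos he hbe
  exact hde (hA.eq_of_rootedIso hG hb hbd hbe (.of_ncard_eq_one (mem_branch_self hd hbd)
    (mem_branch_self he hbe) (by lia) (by lia)))

lemma RootedAsymm.exists_pathGraph_embedding [Finite V] (hG : G.IsAcyclic)
    (hA : RootedAsymm G X b) (hX : (G.induce X).Connected) (hb : b ∈ X) {n : ℕ} (hn : n ≤ 2)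
    (hcard : X.ncard = n + 1) :
    ∃ u : pathGraph (n + 1) ↪g G, u 0 = b ∧ Set.range u = X := by
  induction n generalizing X b with
  | zero =>
    obtain ⟨_, rfl⟩ := Set.ncard_eq_one.1 hcard
    obtain rfl := hb
    have : Subsingleton (Fin (0 + 1)) := Fin.subsingleton_one
    exact ⟨⟨⟨fun _ ↦ b, Function.injective_of_subsingleton _⟩,
      fun {i j} ↦ by simp [Subsingleton.elim i j]⟩, rfl, Set.range_const⟩
  | succ n ih =>
    obtain ⟨e, he, hbe⟩ := exists_adj_of_two_le_ncard hX hb (by lia)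
    have hroot := hA.branch_eq_sdiff_root hG hX hb (by lia) he hbe
    obtain ⟨u, hu0, hu⟩ := ih (hA.branch hG hb he hbe) (connected_branch hG hX he hbe)
      (mem_branch_self he hbe) (by lia)
      (by rw [hroot, Set.ncard_sdiff_singleton_of_mem hb, hcard, Nat.add_sub_cancel])
    obtain ⟨v, hv0, hv⟩ := exists_pathGraph_embedding_insert hG hbe u
      (hu ▸ Set.inter_subset_right) hu0
    exact ⟨v, hv0, by rw [hv, hu, hroot, Set.insert_sdiff_self_of_mem hb]⟩

lemma ncard_neighborSet_pathGraph_le {n : ℕ} (i : Fin n) :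
    ((pathGraph n).neighborSet i).ncard ≤ 2 := by
  rw [← Set.ncard_image_of_injective _ Fin.val_injective]
  suffices Fin.val '' (pathGraph n).neighborSet i ⊆ {i.val - 1, i.val + 1} from
    (Set.ncard_le_ncard this).trans ((Set.ncard_insert_le _ _).trans (by simp))
  rintro _ ⟨j, hj, rfl⟩
  have := pathGraph_adj.1 hj
  simp only [Set.mem_insert_iff, Set.mem_singleton_iff]
  lia

lemma ncard_neighborSet_le_of_pathGraph_embedding {n : ℕ} (u : pathGraph n ↪g G) (i : Fin n)
    (hi : G.neighborSet (u i) ⊆ Set.range u) : (G.neighborSet (u i)).ncard ≤ 2 := by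
  rw [← Set.image_preimage_eq_of_subset hi, Set.ncard_image_of_injective _ u.injective]
  have hpre : u ⁻¹' G.neighborSet (u i) = (pathGraph n).neighborSet i :=
    Set.ext fun _ ↦ u.map_adj_iff
  exact hpre ▸ ncard_neighborSet_pathGraph_le i

lemma nonempty_iso_pathGraph_and_ncard_neighborSet_le [Finite V] (hG : G.IsAcyclic)
    (hce : G.Adj c e) (hX : (G.induce (compOf G c e)).Connected)
    (hA : RootedAsymm G (compOf G c e) e) {n : ℕ} (hn : n ≤ 2)
    (hcard : (compOf G c e).ncard = n + 1) :
    Nonempty (G.induce (compOf G c e) ≃g pathGraph (n + 1)) ∧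
      ∀ w ∈ compOf G c e, (G.neighborSet w).ncard ≤ 2 := by
  obtain ⟨u, hu0, hu⟩ := hA.exists_pathGraph_embedding hG hX (mem_compOf_self hce.ne) hn hcard
  refine ⟨⟨(hu ▸ u.isoInduceRange).symm⟩, fun w hw ↦ ?_⟩
  obtain ⟨v, -, hv⟩ := exists_pathGraph_embedding_insert hG hce u hu.le hu0
  obtain ⟨i, rfl⟩ : w ∈ Set.range v := hv ▸ hu.symm ▸ .inr hw
  refine ncard_neighborSet_le_of_pathGraph_embedding v i fun y hy ↦ ?_
  rw [hv, hu]
  exact or_iff_not_imp_left.2 (mem_compOf_of_adj hw hy)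

end AsymmetricTree

open AsymmetricTree

/-- A minimal finite automorphism-free tree `T` (no leaf can be deleted keeping
automorphism-freeness) has exactly one vertex `c` of degree three, all other vertices
have degree at most two, and the three components of `T \ c` are paths on 1, 2 and 3
vertices respectively. -/
theorem stmt_14 {V : Type*} [Fintype V] (G : SimpleGraph V)
    (hT : G.IsTree) (h2 : 2 ≤ Fintype.card V)
    (hAF : AutFree G)
    (hmin : ∀ l : V, IsLeaf G l → ¬ AutFree (G.induce {x : V | x ≠ l})) :
    ∃ c : V, (G.neighborSet c).ncard = 3 ∧
      (∀ w : V, w ≠ c → (G.neighborSet w).ncard ≤ 2) ∧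
      ∃ x₁ x₂ x₃ : V, x₁ ≠ c ∧ x₂ ≠ c ∧ x₃ ≠ c ∧
        (∀ y : V, y ≠ c → y ∈ compOf G c x₁ ∨ y ∈ compOf G c x₂ ∨ y ∈ compOf G c x₃) ∧
        (compOf G c x₁).ncard = 1 ∧ (compOf G c x₂).ncard = 2 ∧ (compOf G c x₃).ncard = 3 ∧
        Nonempty ((G.induce (compOf G c x₁)) ≃g pathGraph 1) ∧
        Nonempty ((G.induce (compOf G c x₂)) ≃g pathGraph 2) ∧
        Nonempty ((G.induce (compOf G c x₃)) ≃g pathGraph 3) := by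
  have hX := isMinimalAutFree_univ hT h2 hAF hmin
  have hG := hT.isAcyclic
  obtain ⟨c, hc, x₁, -, x₂, -, x₃, -, hx₁, hx₂, hx₃, h₁, h₂, h₃, hadj⟩ := hX.exists_branches hG
  have hpath {e : V} {n : ℕ} (hce : G.Adj c e) :=
    nonempty_iso_pathGraph_and_ncard_neighborSet_le hG hce (n := n)
      (branch_univ (G := G) ▸ connected_branch hG hX.connected trivial hce)
      (branch_univ (G := G) ▸ hX.rootedAsymm.branch hG hc trivial hce)
  rw [branch_univ] at h₁ h₂ h₃
  have hcover (y : V) (hy : y ≠ c) :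
      y ∈ compOf G c x₁ ∨ y ∈ compOf G c x₂ ∨ y ∈ compOf G c x₃ := by
    obtain ⟨e, -, hce, hye⟩ := exists_mem_branch hX.connected hc trivial hy
    obtain rfl | rfl | rfl := hadj e trivial hce <;> simp [hye.2]
  obtain ⟨hp₁, hd₁⟩ := hpath hx₁ (by simp) h₁
  obtain ⟨hp₂, hd₂⟩ := hpath hx₂ (by simp) h₂
  obtain ⟨hp₃, hd₃⟩ := hpath hx₃ le_rfl h₃
  refine ⟨c, Set.ncard_eq_three.2
    ⟨x₁, x₂, x₃, by grind, by grind, by grind, Set.ext fun y ↦ ⟨hadj y trivial, ?_⟩⟩,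
    fun w hw ↦ (hcover w hw).elim (hd₁ w) (Or.elim · (hd₂ w) (hd₃ w)), x₁, x₂, x₃,
    hx₁.ne', hx₂.ne', hx₃.ne', hcover, h₁, h₂, h₃, hp₁, hp₂, hp₃⟩
  · rintro (rfl | rfl | rfl) <;> assumption
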